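/- There exists a universal constant C > 0 such that for every integer k ≥ 1 and every polynomial P on ℝ^k, one has sup_{x ∈ ℝ^k} φ_k(x) · |∇P(x)| ≤ C · √(deg P) · sup_{x ∈ ℝ^k} φ_k(x) · |P(x)|, where |∇P(x)| = (Σ_{j=1}^k (∂_j P(x))²)^{1/2}. -/

import Mathlib

/-! On a line, rescale so that a polynomial `q` of degree at most `n` satisfies
`|q t| exp (-n t² / 2) ≤ M`. On `[-1, 1]` this bounds `|q|` by `M exp (n / 2)`, and
Bernstein–Walsh turns the bound into the growth estimate `|q z| ≤ M (√e (2 |z| + 1)) ^ n`. Hence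
`F z = q z exp (-n z² / 2)` is at most `M exp (3 n)` on the strip `|Im z| ≤ 1`, and the three lines
theorem improves this to `M exp (3 n |Im z|)`, which is `O(M)` at distance `1 / n` from the real
axis. The Cauchy estimate then bounds the derivative of `F` on the real axis by `O(n M)`. It differs
from the damped derivative of `q` by `n s F s`, and `s F s` is `O(M)`: for large `|s|` this already
follows from the growth estimate.

The Gaussian weight on `ℝ^k` restricted to the line through `x` in the direction of the gradient is
a constant multiple of the one-dimensional weight, so the constant does not see the dimension. -/

open MeasureTheory Real

/-- The density of the standard Gaussian measure on `ℝ^k`. -/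
noncomputable def gaussDensity (k : ℕ) (x : Fin k → ℝ) : ℝ :=
  (2 * π) ^ (-(k : ℝ) / 2) * Real.exp (-(∑ j, (x j) ^ 2) / 2)

/-- The Euclidean length of the gradient of a polynomial on `ℝ^k`. -/
noncomputable def gradNorm {k : ℕ} (P : MvPolynomial (Fin k) ℝ) (x : Fin k → ℝ) : ℝ :=
  Real.sqrt (∑ j, (MvPolynomial.eval x (MvPolynomial.pderiv j P)) ^ 2)

section ComplexAnalysis

open Polynomial

lemma eval_homogenize_mul {R : Type*} [CommSemiring R] {p : R[X]} {n : ℕ} (hp : p.natDegree ≤ n)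
    (u z : R) : MvPolynomial.eval ![u * z, u] (p.homogenize n) = u ^ n * p.eval z := by
  refine induction_with_natDegree_le
    (fun p => MvPolynomial.eval ![u * z, u] (p.homogenize n) = u ^ n * p.eval z) n
    (by simp) (fun m a _ hm => ?_) (fun p q _ _ hp hq => by simp [hp, hq, mul_add]) p hp
  obtain ⟨l, rfl⟩ := Nat.exists_eq_add_of_le hm
  rw [homogenize_C_mul, homogenize_X_pow (Nat.le_add_right m l), Nat.add_sub_cancel_left]
  simp only [map_mul, MvPolynomial.eval_C, map_pow, MvPolynomial.eval_X, Matrix.cons_val_zero,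
    Matrix.cons_val_one, Matrix.cons_val_fin_one, eval_mul, eval_C, eval_pow, eval_X]
  ring

lemma exists_norm_le_one_and_sq_add_one_eq (z : ℂ) :
    ∃ u : ℂ, ‖u‖ ≤ 1 ∧ u ^ 2 + 1 = 2 * (u * z) := by
  obtain ⟨w, hw⟩ := IsAlgClosed.exists_pow_nat_eq (z ^ 2 - 1) two_pos
  have hprod : ‖z + w‖ * ‖z - w‖ = 1 := by
    rw [← norm_mul, show (z + w) * (z - w) = 1 by linear_combination -hw, norm_one]
  rcases le_total ‖z + w‖ 1 with h | h
  · exact ⟨z + w, h, by linear_combination hw⟩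
  · exact ⟨z - w, by nlinarith [norm_nonneg (z - w)], by linear_combination hw⟩

-- In the Joukowski variable `z = (u + 1 / u) / 2`, the function `u ^ n * q z` is a polynomial in
-- `u`, also at `u = 0`, and `z` runs through `[-1, 1]` as `u` runs through the unit circle.
lemma norm_pow_mul_eval_le_of_sq_add_one_eq {q : ℂ[X]} {n : ℕ} (hq : q.natDegree ≤ n) {M : ℝ}
    (hM : ∀ t ∈ Set.Icc (-1 : ℝ) 1, ‖q.eval (t : ℂ)‖ ≤ M) {u z : ℂ} (hu : ‖u‖ ≤ 1)
    (huz : u ^ 2 + 1 = 2 * (u * z)) : ‖u ^ n * q.eval z‖ ≤ M := by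
  set G : ℂ → ℂ := fun w => MvPolynomial.eval ![(w ^ 2 + 1) / 2, w] (q.homogenize n)
  have hG {w ζ : ℂ} (h : w ^ 2 + 1 = 2 * (w * ζ)) : G w = w ^ n * q.eval ζ := by
    simp only [G, h, mul_div_cancel_left₀ _ (two_ne_zero' ℂ), eval_homogenize_mul hq]
  have hdiff : Differentiable ℂ G := fun w =>
    (AnalyticAt.aeval_mvPolynomial (f := fun w : ℂ => ![(w ^ 2 + 1) / 2, w])
      (fun i => by
        fin_cases i
        exacts [by change AnalyticAt ℂ (fun w : ℂ => (w ^ 2 + 1) / 2) w; fun_prop, analyticAt_id])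
      _).differentiableAt
  have hcircle : ∀ w ∈ frontier (Metric.ball (0 : ℂ) 1), ‖G w‖ ≤ M := by
    intro w hw
    have hw1 : ‖w‖ = 1 := by simpa [frontier_ball] using hw
    have hre : w ^ 2 + 1 = 2 * (w * (w.re : ℂ)) := by
      have hmul : w * starRingEnd ℂ w = 1 := by simp [Complex.mul_conj', hw1]
      have hadd : w + starRingEnd ℂ w = 2 * w.re := by simpa using Complex.add_conj w
      linear_combination w * hadd - hmul
    rw [hG hre, norm_mul, norm_pow, hw1, one_pow, one_mul]
    exact hM _ (abs_le.1 ((Complex.abs_re_le_norm w).trans_eq hw1))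
  rw [← hG huz]
  exact Complex.norm_le_of_forall_mem_frontier_norm_le Metric.isBounded_ball hdiff.diffContOnCl
    hcircle (by rwa [closure_ball _ one_ne_zero, mem_closedBall_zero_iff])

lemma norm_eval_le_mul_pow_of_Icc {q : ℂ[X]} {n : ℕ} (hq : q.natDegree ≤ n) {M : ℝ}
    (hM : ∀ t ∈ Set.Icc (-1 : ℝ) 1, ‖q.eval (t : ℂ)‖ ≤ M) (z : ℂ) :
    ‖q.eval z‖ ≤ M * (2 * ‖z‖ + 1) ^ n := by
  obtain ⟨u, hu, huz⟩ := exists_norm_le_one_and_sq_add_one_eq z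
  have h_inv : 1 ≤ ‖u‖ * (2 * ‖z‖ + 1) := by
    have h : (1 : ℂ) = u * (2 * z - u) := by linear_combination huz
    calc (1 : ℝ) = ‖u‖ * ‖2 * z - u‖ := by rw [← norm_mul, ← h, norm_one]
      _ ≤ ‖u‖ * (2 * ‖z‖ + 1) := by
        gcongr
        refine (norm_sub_le _ _).trans ?_
        gcongr
        simp
  calc ‖q.eval z‖ ≤ ‖q.eval z‖ * (‖u‖ * (2 * ‖z‖ + 1)) ^ n :=
        le_mul_of_one_le_right (norm_nonneg _) (one_le_pow₀ h_inv)
    _ = ‖u ^ n * q.eval z‖ * (2 * ‖z‖ + 1) ^ n := by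
        rw [norm_mul, norm_pow, mul_pow]
        ring
    _ ≤ M * (2 * ‖z‖ + 1) ^ n := by
        gcongr
        exact norm_pow_mul_eval_le_of_sq_add_one_eq hq hM hu huz

open Complex.HadamardThreeLines in
lemma norm_le_mul_exp_of_im_mem_Icc {E : Type*} [NormedAddCommGroup E] [NormedSpace ℂ E]
    {f : ℂ → E} {r M c : ℝ} (hr : 0 < r) (hf : DiffContOnCl ℂ f (Complex.im ⁻¹' Set.Ioo 0 r))
    (hreal : ∀ t : ℝ, ‖f t‖ ≤ M) (hstrip : ∀ z : ℂ, z.im ∈ Set.Icc 0 r → ‖f z‖ ≤ M * exp (c * r))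
    {z : ℂ} (hz : z.im ∈ Set.Icc 0 r) : ‖f z‖ ≤ M * exp (c * z.im) := by
  have hM : 0 ≤ M := (norm_nonneg _).trans (hreal 0)
  have him : ∀ w : ℂ, (Complex.I * w).im = w.re := by simp
  have hrot : Complex.I * (-Complex.I * z) = z := by
    rw [← mul_assoc, mul_neg, Complex.I_mul_I, neg_neg, one_mul]
  have hre : (-Complex.I * z).re = z.im := by simp
  have hcomp : DiffContOnCl ℂ (fun w => f (Complex.I * w)) (verticalStrip 0 r) :=
    hf.comp (by fun_prop : Differentiable ℂ fun w => Complex.I * w).diffContOnCl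
      fun w hw => by simpa [verticalStrip] using hw
  have hbdd : BddAbove ((norm ∘ fun w => f (Complex.I * w)) '' verticalClosedStrip 0 r) := by
    refine ⟨M * exp (c * r), ?_⟩
    rintro _ ⟨w, hw, rfl⟩
    exact hstrip _ (by rwa [him])
  have hleft : ∀ w ∈ Complex.re ⁻¹' {0}, ‖f (Complex.I * w)‖ ≤ M := by
    intro w hw
    have hw_real : Complex.I * w = ((-w.im : ℝ) : ℂ) := by apply Complex.ext <;> simp_all
    exact hw_real ▸ hreal _
  have hright : ∀ w ∈ Complex.re ⁻¹' {r}, ‖f (Complex.I * w)‖ ≤ M * exp (c * r) :=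
    fun w hw => hstrip _ (by rw [him, hw]; exact Set.right_mem_Icc.2 hr.le)
  have key := norm_le_interp_of_mem_verticalClosedStrip' (z := -Complex.I * z) hr
    (by simpa [verticalClosedStrip] using hz) hcomp hbdd hleft hright
  simp only [hrot, hre, sub_zero] at key
  refine key.trans_eq ?_
  have hθ : z.im / r ≤ 1 := (div_le_one hr).2 hz.2
  have hθ0 : 0 ≤ z.im / r := div_nonneg hz.1 hr.le
  rw [Real.mul_rpow hM (exp_pos _).le, ← mul_assoc,
    ← Real.rpow_add_of_nonneg hM (sub_nonneg.2 hθ) hθ0, sub_add_cancel, Real.rpow_one,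
    ← Real.exp_mul, mul_assoc, mul_div_cancel₀ _ hr.ne']

lemma norm_le_mul_exp_of_abs_im_le {E : Type*} [NormedAddCommGroup E] [NormedSpace ℂ E]
    {f : ℂ → E} {r M c : ℝ} (hr : 0 < r) (hf : DiffContOnCl ℂ f (Complex.im ⁻¹' Set.Ioo (-r) r))
    (hreal : ∀ t : ℝ, ‖f t‖ ≤ M) (hstrip : ∀ z : ℂ, |z.im| ≤ r → ‖f z‖ ≤ M * exp (c * r))
    {z : ℂ} (hz : |z.im| ≤ r) : ‖f z‖ ≤ M * exp (c * |z.im|) := by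
  rcases le_total 0 z.im with h | h
  · rw [abs_of_nonneg h] at hz ⊢
    refine norm_le_mul_exp_of_im_mem_Icc hr (hf.mono fun w hw => ⟨by linarith [hw.1], hw.2⟩) hreal
      (fun w hw => hstrip w ?_) ⟨h, hz⟩
    rw [abs_of_nonneg hw.1]
    exact hw.2
  · rw [abs_of_nonpos h] at hz ⊢
    have key := norm_le_mul_exp_of_im_mem_Icc (f := fun w => f (-w)) (z := -z) (c := c) (M := M) hr
      ((hf.comp differentiable_neg.diffContOnCl) fun w hw => ?_)
      (fun t => by simpa using hreal (-t))
      (fun w hw => hstrip (-w) ?_) ⟨by simpa using h, by simpa using hz⟩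
    · simpa using key
    · simp only [Set.mem_preimage, Set.mem_Ioo, Complex.neg_im] at hw ⊢
      constructor <;> linarith
    · rw [Complex.neg_im, abs_neg, abs_of_nonneg hw.1]
      exact hw.2

end ComplexAnalysis

section OneVariable

open Polynomial

/-- The entire function `q z * exp (-n z² / 2)`, for a polynomial `q` and a bound `n` for its
degree. With the factor `n` in the exponent, both `q` and the weight grow like `n`-th powers;
`norm_gaussDamped_comp_C_mul_X` rescales to the weight `exp (-t² / 2)`. -/
noncomputable def gaussDamped (n : ℕ) (q : ℂ[X]) (z : ℂ) : ℂ :=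
  q.eval z * Complex.exp (-(n * z ^ 2 / 2))

variable {n : ℕ} {q : ℂ[X]} {M : ℝ}

lemma norm_gaussDamped (n : ℕ) (q : ℂ[X]) (z : ℂ) :
    ‖gaussDamped n q z‖ = ‖q.eval z‖ * exp ((z.im ^ 2 - z.re ^ 2) / 2) ^ n := by
  have hre : (-(n * z ^ 2 / 2) : ℂ).re = n * ((z.im ^ 2 - z.re ^ 2) / 2) := by
    rw [show (-(n * z ^ 2 / 2) : ℂ) = ((-(n / 2) : ℝ) : ℂ) * (z * z) by push_cast; ring,
      Complex.re_ofReal_mul, Complex.mul_re]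
    ring
  rw [gaussDamped, norm_mul, Complex.norm_exp, hre, exp_nat_mul]

lemma hasDerivAt_gaussDamped (n : ℕ) (q : ℂ[X]) (z : ℂ) :
    HasDerivAt (gaussDamped n q)
      (gaussDamped n q.derivative z - n * (z * gaussDamped n q z)) z := by
  have hexponent : HasDerivAt (fun w : ℂ => -(n * w ^ 2 / 2)) (-(n * z) : ℂ) z := by
    refine (((hasDerivAt_pow 2 z).const_mul (n : ℂ)).div_const 2).neg.congr_deriv ?_
    push_cast
    ring
  refine ((q.hasDerivAt z).mul hexponent.cexp).congr_deriv ?_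
  simp only [gaussDamped]
  ring

lemma differentiable_gaussDamped (n : ℕ) (q : ℂ[X]) : Differentiable ℂ (gaussDamped n q) :=
  fun z => (hasDerivAt_gaussDamped n q z).differentiableAt

lemma norm_gaussDamped_le_pow (hq : q.natDegree ≤ n) (hM : ∀ t : ℝ, ‖gaussDamped n q t‖ ≤ M)
    (z : ℂ) : ‖gaussDamped n q z‖ ≤
      M * (exp ((1 + z.im ^ 2 - z.re ^ 2) / 2) * (2 * ‖z‖ + 1)) ^ n := by
  have hM0 : 0 ≤ M := (norm_nonneg _).trans (hM 0)
  have hIcc : ∀ t ∈ Set.Icc (-1 : ℝ) 1, ‖q.eval (t : ℂ)‖ ≤ M * exp (1 / 2) ^ n := by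
    intro t ht
    have ht1 : t ^ 2 ≤ 1 := (sq_le_one_iff_abs_le_one t).2 (abs_le.2 ht)
    calc ‖q.eval (t : ℂ)‖ = ‖gaussDamped n q t‖ * exp (t ^ 2 / 2) ^ n := by
          rw [norm_gaussDamped, mul_assoc, ← mul_pow, ← exp_add]
          simp [neg_div]
      _ ≤ M * exp (1 / 2) ^ n := by
          gcongr
          exact hM t
  calc ‖gaussDamped n q z‖
      ≤ M * exp (1 / 2) ^ n * (2 * ‖z‖ + 1) ^ n * exp ((z.im ^ 2 - z.re ^ 2) / 2) ^ n := by
        rw [norm_gaussDamped]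
        gcongr
        exact norm_eval_le_mul_pow_of_Icc hq hIcc z
    _ = M * (exp ((1 + z.im ^ 2 - z.re ^ 2) / 2) * (2 * ‖z‖ + 1)) ^ n := by
        rw [show (1 + z.im ^ 2 - z.re ^ 2) / 2 = 1 / 2 + (z.im ^ 2 - z.re ^ 2) / 2 by ring,
          exp_add, mul_pow, mul_pow]
        ring

lemma norm_gaussDamped_le_exp_of_abs_im_le_one (hq : q.natDegree ≤ n)
    (hM : ∀ t : ℝ, ‖gaussDamped n q t‖ ≤ M) {z : ℂ} (hz : |z.im| ≤ 1) :
    ‖gaussDamped n q z‖ ≤ M * exp (3 * n) := by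
  have hM0 : 0 ≤ M := (norm_nonneg _).trans (hM 0)
  have hnorm : ‖z‖ ≤ |z.re| + 1 := (Complex.norm_le_abs_re_add_abs_im z).trans (by gcongr)
  have him : z.im ^ 2 ≤ 1 := (sq_le_one_iff_abs_le_one _).2 hz
  have hlin : 2 * ‖z‖ + 1 ≤ exp (2 + z.re ^ 2 / 2) := by
    have h2 : 2 ≤ exp 1 := by linarith [add_one_le_exp (1 : ℝ)]
    calc 2 * ‖z‖ + 1 ≤ 2 * (1 + z.re ^ 2 / 2 + 1) := by
          nlinarith [sq_nonneg (|z.re| - 1), sq_abs z.re]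
      _ ≤ exp 1 * exp (1 + z.re ^ 2 / 2) := by
          gcongr
          exact add_one_le_exp _
      _ = exp (2 + z.re ^ 2 / 2) := by rw [← exp_add]; ring_nf
  rw [mul_comm 3 (n : ℝ), exp_nat_mul]
  refine (norm_gaussDamped_le_pow hq hM z).trans ?_
  gcongr
  calc exp ((1 + z.im ^ 2 - z.re ^ 2) / 2) * (2 * ‖z‖ + 1)
      ≤ exp ((1 + 1 - z.re ^ 2) / 2) * exp (2 + z.re ^ 2 / 2) := by gcongr
    _ = exp 3 := by rw [← exp_add]; ring_nf

lemma norm_gaussDamped_le_exp_abs_im (hq : q.natDegree ≤ n)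
    (hM : ∀ t : ℝ, ‖gaussDamped n q t‖ ≤ M) {z : ℂ} (hz : |z.im| ≤ 1) :
    ‖gaussDamped n q z‖ ≤ M * exp (3 * n * |z.im|) := by
  refine norm_le_mul_exp_of_abs_im_le one_pos (differentiable_gaussDamped n q).diffContOnCl hM
    (fun w hw => ?_) hz
  rw [mul_one]
  exact norm_gaussDamped_le_exp_of_abs_im_le_one hq hM hw

lemma norm_deriv_gaussDamped_le (hn : 0 < n) (hq : q.natDegree ≤ n)
    (hM : ∀ t : ℝ, ‖gaussDamped n q t‖ ≤ M) (s : ℝ) :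
    ‖deriv (gaussDamped n q) s‖ ≤ exp 3 * n * M := by
  have hM0 : 0 ≤ M := (norm_nonneg _).trans (hM 0)
  have hn1 : (1 : ℝ) ≤ n := by exact_mod_cast hn
  refine (Complex.norm_deriv_le_of_forall_mem_sphere_norm_le (R := 1 / n) (C := M * exp 3)
    (by positivity) (differentiable_gaussDamped n q).diffContOnCl
    fun z hz => ?_).trans_eq (by field_simp)
  have him : |z.im| ≤ 1 / n := by
    simpa [mem_sphere_iff_norm.1 hz] using Complex.abs_im_le_norm (z - s)
  refine (norm_gaussDamped_le_exp_abs_im hq hM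
    (him.trans (div_le_one_of_le₀ hn1 n.cast_nonneg))).trans ?_
  gcongr
  calc 3 * n * |z.im| ≤ 3 * n * (1 / n) := by gcongr
    _ = 3 := by field_simp

lemma mul_exp_mul_two_mul_add_one_le_one {x : ℝ} (hx : 5 ≤ x) :
    x * (exp ((1 - x ^ 2) / 2) * (2 * x + 1)) ≤ 1 := by
  have hexp : ((x ^ 2 - 1) / 2) ^ 2 / 2 ≤ exp ((x ^ 2 - 1) / 2) :=
    pow_div_factorial_le_exp ((x ^ 2 - 1) / 2) (by nlinarith) 2
  have hpoly : x * (2 * x + 1) ≤ ((x ^ 2 - 1) / 2) ^ 2 / 2 := by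
    nlinarith [mul_nonneg (sub_nonneg.2 hx) (sub_nonneg.2 hx), sq_nonneg (x ^ 2 - 25)]
  rw [show (1 - x ^ 2) / 2 = -((x ^ 2 - 1) / 2) by ring, exp_neg, mul_left_comm,
    inv_mul_le_one₀ (exp_pos _)]
  exact hpoly.trans hexp

lemma abs_mul_norm_gaussDamped_le (hn : 0 < n) (hq : q.natDegree ≤ n)
    (hM : ∀ t : ℝ, ‖gaussDamped n q t‖ ≤ M) (s : ℝ) :
    |s| * ‖gaussDamped n q s‖ ≤ 5 * M := by
  have hM0 : 0 ≤ M := (norm_nonneg _).trans (hM 0)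
  rcases le_total |s| 5 with hs | hs
  · gcongr
    exact hM s
  have hbase : |s| * (exp ((1 - s ^ 2) / 2) * (2 * |s| + 1)) ≤ 1 := by
    simpa only [sq_abs] using mul_exp_mul_two_mul_add_one_le_one hs
  have hs1 : |s| ≤ |s| ^ n := le_self_pow₀ (by linarith) hn.ne'
  calc |s| * ‖gaussDamped n q s‖
      ≤ |s| ^ n * (M * (exp ((1 - s ^ 2) / 2) * (2 * |s| + 1)) ^ n) := by
        gcongr
        simpa using norm_gaussDamped_le_pow hq hM s
    _ = M * (|s| * (exp ((1 - s ^ 2) / 2) * (2 * |s| + 1))) ^ n := by rw [mul_pow |s|]; ring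
    _ ≤ M * 1 := by
        gcongr
        exact pow_le_one₀ (by positivity) hbase
    _ ≤ 5 * M := by linarith

lemma norm_gaussDamped_derivative_le (hq : q.natDegree ≤ n)
    (hM : ∀ t : ℝ, ‖gaussDamped n q t‖ ≤ M) (s : ℝ) :
    ‖gaussDamped n q.derivative s‖ ≤ (exp 3 + 5) * n * M := by
  rcases n.eq_zero_or_pos with rfl | hn
  · simp [gaussDamped, derivative_of_natDegree_zero (Nat.le_zero.1 hq)]
  have hderiv := (hasDerivAt_gaussDamped n q s).deriv
  calc ‖gaussDamped n q.derivative s‖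
      = ‖deriv (gaussDamped n q) s + n * (s * gaussDamped n q s)‖ := by
        rw [hderiv, sub_add_cancel]
    _ ≤ ‖deriv (gaussDamped n q) s‖ + n * (|s| * ‖gaussDamped n q s‖) := by
        refine (norm_add_le _ _).trans_eq ?_
        simp
    _ ≤ exp 3 * n * M + n * (5 * M) := by
        gcongr ?_ + n * ?_
        · exact norm_deriv_gaussDamped_le hn hq hM s
        · exact abs_mul_norm_gaussDamped_le hn hq hM s
    _ = (exp 3 + 5) * n * M := by ring

lemma norm_gaussDamped_comp_C_mul_X (n : ℕ) (q : ℂ[X]) (t : ℝ) :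
    ‖gaussDamped n (q.comp (C ((√n : ℝ) : ℂ) * X)) t‖ =
      ‖q.eval ((√n * t : ℝ) : ℂ)‖ * exp (-(√n * t) ^ 2 / 2) := by
  have hexp : (n : ℝ) * ((0 ^ 2 - t ^ 2) / 2) = -(√n * t) ^ 2 / 2 := by
    rw [neg_div, mul_pow, sq_sqrt n.cast_nonneg]
    ring
  rw [norm_gaussDamped, ← exp_nat_mul, Complex.ofReal_im, Complex.ofReal_re, hexp, eval_comp,
    eval_mul, eval_C, eval_X, Complex.ofReal_mul]

lemma norm_eval_derivative_mul_exp_le (hq : q.natDegree ≤ n)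
    (hM : ∀ t : ℝ, ‖q.eval (t : ℂ)‖ * exp (-t ^ 2 / 2) ≤ M) (s : ℝ) :
    ‖q.derivative.eval (s : ℂ)‖ * exp (-s ^ 2 / 2) ≤ (exp 3 + 5) * √n * M := by
  rcases n.eq_zero_or_pos with rfl | hn
  · simp [derivative_of_natDegree_zero (Nat.le_zero.1 hq)]
  have hroot : 0 < √(n : ℝ) := by positivity
  set r : ℂ[X] := q.comp (C ((√n : ℝ) : ℂ) * X) with hr
  have hr_deg : r.natDegree ≤ n :=
    (natDegree_comp_le.trans <| Nat.mul_le_mul hq <|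
      (natDegree_C_mul_le _ _).trans natDegree_X_le).trans_eq (mul_one n)
  have hr_deriv : r.derivative =
      C ((√n : ℝ) : ℂ) * q.derivative.comp (C ((√n : ℝ) : ℂ) * X) := by
    rw [hr, derivative_comp, derivative_C_mul, derivative_X, mul_one]
  have hscaled := norm_gaussDamped_derivative_le hr_deg
    (fun t => (norm_gaussDamped_comp_C_mul_X n q t).trans_le (hM _)) (s / √n)
  have hleft : ‖gaussDamped n r.derivative ((s / √n : ℝ) : ℂ)‖ =
      √n * (‖q.derivative.eval (s : ℂ)‖ * exp (-s ^ 2 / 2)) := by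
    have := norm_gaussDamped_comp_C_mul_X n q.derivative (s / √n)
    rw [mul_div_cancel₀ _ hroot.ne'] at this
    rw [← this, hr_deriv, gaussDamped, gaussDamped, eval_mul, eval_C, mul_assoc, norm_mul,
      Complex.norm_of_nonneg hroot.le]
  rw [hleft] at hscaled
  refine le_of_mul_le_mul_left (hscaled.trans_eq ?_) hroot
  linear_combination -(exp 3 + 5) * M * mul_self_sqrt n.cast_nonneg

lemma abs_eval_derivative_mul_exp_le {p : ℝ[X]} (hp : p.natDegree ≤ n)
    (hM : ∀ t : ℝ, |p.eval t| * exp (-t ^ 2 / 2) ≤ M) (s : ℝ) :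
    |p.derivative.eval s| * exp (-s ^ 2 / 2) ≤ (exp 3 + 5) * √n * M := by
  have heval (r : ℝ[X]) (t : ℝ) : ‖(r.map Complex.ofRealHom).eval (t : ℂ)‖ = |r.eval t| := by
    rw [← Complex.ofRealHom_eq_coe, eval_map_apply, Complex.ofRealHom_eq_coe, Complex.norm_real,
      norm_eq_abs]
  rw [← heval, ← derivative_map]
  exact norm_eval_derivative_mul_exp_le (natDegree_map_le.trans hp)
    (fun t => by rw [heval]; exact hM t) s

end OneVariable

section LineRestriction

variable {σ R : Type*} [CommSemiring R]

/-- The restriction `t ↦ P (y + t v)` of a polynomial in several variables to the line through `y`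
with direction `v`, as a polynomial in one variable. -/
noncomputable def lineRestrict (y v : σ → R) : MvPolynomial σ R →ₐ[R] Polynomial R :=
  MvPolynomial.aeval fun j => Polynomial.C (y j) + Polynomial.C (v j) * Polynomial.X

lemma eval_lineRestrict (y v : σ → R) (P : MvPolynomial σ R) (t : R) :
    (lineRestrict y v P).eval t = MvPolynomial.eval (y + t • v) P := by
  rw [lineRestrict, ← Polynomial.coe_aeval_eq_eval, MvPolynomial.comp_aeval_apply,
    MvPolynomial.aeval_eq_eval]
  congr 2
  funext j
  simp only [map_add, map_mul, Polynomial.coe_aeval_eq_eval, Polynomial.eval_C, Polynomial.eval_X,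
    Pi.add_apply, Pi.smul_apply, smul_eq_mul, mul_comm t]

lemma natDegree_lineRestrict_le (y v : σ → R) (P : MvPolynomial σ R) :
    (lineRestrict y v P).natDegree ≤ P.totalDegree := by
  refine (MvPolynomial.aeval_natDegree_le P le_rfl _ fun j => ?_).trans_eq (mul_one _)
  rw [add_comm]
  exact Polynomial.natDegree_linear_le

lemma derivative_lineRestrict [Fintype σ] (y v : σ → R) (P : MvPolynomial σ R) :
    (lineRestrict y v P).derivative =
      ∑ j, Polynomial.C (v j) * lineRestrict y v (MvPolynomial.pderiv j P) := by
  classical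
  induction P using MvPolynomial.induction_on with
  | C a => simp [lineRestrict]
  | add p q hp hq => simp only [map_add, hp, hq, mul_add, Finset.sum_add_distrib]
  | mul_X p i hp =>
    have hX : (lineRestrict y v (MvPolynomial.X i)).derivative = Polynomial.C (v i) := by
      simp [lineRestrict]
    have hsum : ∑ j, Polynomial.C (v j) * (lineRestrict y v p *
        lineRestrict y v (MvPolynomial.pderiv j (MvPolynomial.X i))) =
          lineRestrict y v p * Polynomial.C (v i) := by
      rw [Finset.sum_eq_single i (fun j _ hj => by simp [MvPolynomial.pderiv_X_of_ne hj.symm])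
        (by simp), MvPolynomial.pderiv_X_self, map_one, mul_one, mul_comm]
    simp only [map_mul, Polynomial.derivative_mul, hp, hX, MvPolynomial.pderiv_mul, map_add,
      mul_add, Finset.sum_add_distrib, Finset.sum_mul, mul_assoc, hsum]

end LineRestriction

section SeveralVariables

variable {σ : Type*} [Fintype σ]

lemma abs_pow_mul_exp_neg_sq_le (d : ℕ) (t : ℝ) :
    |t| ^ d * exp (-t ^ 2 / 2) ≤ d.factorial * exp 1 := by
  have hpow : |t| ^ d ≤ d.factorial * exp |t| := by
    rw [← div_le_iff₀' (by positivity)]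
    exact pow_div_factorial_le_exp _ (abs_nonneg t) d
  calc |t| ^ d * exp (-t ^ 2 / 2) ≤ d.factorial * exp |t| * exp (-t ^ 2 / 2) := by gcongr
    _ = d.factorial * exp (|t| + -t ^ 2 / 2) := by rw [mul_assoc, ← exp_add]
    _ ≤ d.factorial * exp 1 := by
      gcongr
      nlinarith [sq_nonneg (|t| - 1), sq_abs t]

lemma bddAbove_abs_eval_mul_exp (P : MvPolynomial σ ℝ) :
    BddAbove (Set.range fun x : σ → ℝ =>
      |MvPolynomial.eval x P| * exp (-(∑ j, x j ^ 2) / 2)) := by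
  refine ⟨∑ d ∈ P.support, |P.coeff d| * ∏ j, ((d j).factorial * exp 1), ?_⟩
  rintro _ ⟨x, rfl⟩
  have hexp : exp (-(∑ j, x j ^ 2) / 2) = ∏ j, exp (-x j ^ 2 / 2) := by
    rw [← exp_sum, ← Finset.sum_div, Finset.sum_neg_distrib]
  calc |MvPolynomial.eval x P| * exp (-(∑ j, x j ^ 2) / 2)
      ≤ (∑ d ∈ P.support, |P.coeff d| * ∏ j, |x j| ^ d j) * ∏ j, exp (-x j ^ 2 / 2) := by
        rw [hexp, MvPolynomial.eval_eq']
        gcongr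
        refine (Finset.abs_sum_le_sum_abs _ _).trans_eq (Finset.sum_congr rfl fun d _ => ?_)
        simp only [abs_mul, Finset.abs_prod, abs_pow]
    _ = ∑ d ∈ P.support, |P.coeff d| * ∏ j, (|x j| ^ d j * exp (-x j ^ 2 / 2)) := by
        simp only [Finset.sum_mul, Finset.prod_mul_distrib, mul_assoc]
    _ ≤ ∑ d ∈ P.support, |P.coeff d| * ∏ j, ((d j).factorial * exp 1) := by
        gcongr ∑ d ∈ _, _ * ∏ j, ?_ with d _ j _
        exact abs_pow_mul_exp_neg_sq_le (d j) (x j)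

lemma sum_add_smul_sq_of_sum_mul_eq_zero {y v : σ → ℝ} (hv : ∑ j, v j ^ 2 = 1)
    (hyv : ∑ j, y j * v j = 0) (t : ℝ) :
    ∑ j, (y + t • v) j ^ 2 = ∑ j, y j ^ 2 + t ^ 2 := by
  have hexpand (j : σ) :
      (y + t • v) j ^ 2 = y j ^ 2 + 2 * t * (y j * v j) + t ^ 2 * v j ^ 2 := by
    simp only [Pi.add_apply, Pi.smul_apply, smul_eq_mul]
    ring
  simp only [hexpand, Finset.sum_add_distrib, ← Finset.mul_sum, hyv, hv, mul_zero, mul_one,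
    add_zero]

lemma exists_eq_add_smul_and_sum_mul_eq_zero {v : σ → ℝ} (hv : ∑ j, v j ^ 2 = 1) (x : σ → ℝ) :
    ∃ (y : σ → ℝ) (s : ℝ), x = y + s • v ∧ ∑ j, y j * v j = 0 := by
  refine ⟨x - (∑ j, x j * v j) • v, ∑ j, x j * v j, (sub_add_cancel _ _).symm, ?_⟩
  simp only [Pi.sub_apply, Pi.smul_apply, smul_eq_mul, sub_mul, Finset.sum_sub_distrib, mul_assoc,
    ← sq, ← Finset.mul_sum, hv, mul_one, sub_self]

lemma sqrt_sum_sq_le_of_forall_sum_mul_le {g : σ → ℝ} {B : ℝ} (hB : 0 ≤ B)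
    (h : ∀ v : σ → ℝ, ∑ j, v j ^ 2 = 1 → ∑ j, v j * g j ≤ B) : √(∑ j, g j ^ 2) ≤ B := by
  have hsq : √(∑ j, g j ^ 2) ^ 2 = ∑ j, g j ^ 2 := sq_sqrt (by positivity)
  set r := √(∑ j, g j ^ 2)
  rcases (sqrt_nonneg (∑ j, g j ^ 2)).eq_or_lt' with hr | hr
  · exact hr.trans_le hB
  have hr' : r ≠ 0 := hr.ne'
  calc r = ∑ j, g j / r * g j := by
        simp only [div_mul_eq_mul_div, ← sq, ← Finset.sum_div, ← hsq]
        field_simp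
    _ ≤ B := h _ (by simp only [div_pow, ← Finset.sum_div, ← hsq]; field_simp)

variable {P : MvPolynomial σ ℝ} {M : ℝ}

lemma abs_sum_mul_eval_pderiv_mul_exp_le
    (hM : ∀ x, |MvPolynomial.eval x P| * exp (-(∑ j, x j ^ 2) / 2) ≤ M) {v : σ → ℝ}
    (hv : ∑ j, v j ^ 2 = 1) (x : σ → ℝ) :
    |∑ j, v j * MvPolynomial.eval x (MvPolynomial.pderiv j P)| * exp (-(∑ j, x j ^ 2) / 2) ≤
      (exp 3 + 5) * √P.totalDegree * M := by
  obtain ⟨y, s, rfl, hyv⟩ := exists_eq_add_smul_and_sum_mul_eq_zero hv x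
  set a := exp (-(∑ j, y j ^ 2) / 2) with ha
  have ha0 : 0 < a := exp_pos _
  have hfactor (t : ℝ) : exp (-(∑ j, (y + t • v) j ^ 2) / 2) = exp (-t ^ 2 / 2) * a := by
    rw [sum_add_smul_sq_of_sum_mul_eq_zero hv hyv, ha, ← exp_add]
    ring_nf
  have hline (t : ℝ) : |(lineRestrict y v P).eval t| * exp (-t ^ 2 / 2) ≤ M / a := by
    rw [le_div_iff₀ ha0, mul_assoc, ← hfactor, eval_lineRestrict]
    exact hM _
  have key := abs_eval_derivative_mul_exp_le (natDegree_lineRestrict_le y v P) hline s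
  rw [mul_div_assoc', le_div_iff₀ ha0, mul_assoc, ← hfactor, derivative_lineRestrict] at key
  simpa only [Polynomial.eval_finsetSum, Polynomial.eval_mul, Polynomial.eval_C,
    eval_lineRestrict] using key

lemma sqrt_sum_eval_pderiv_sq_mul_exp_le
    (hM : ∀ x, |MvPolynomial.eval x P| * exp (-(∑ j, x j ^ 2) / 2) ≤ M) (x : σ → ℝ) :
    √(∑ j, MvPolynomial.eval x (MvPolynomial.pderiv j P) ^ 2) * exp (-(∑ j, x j ^ 2) / 2) ≤
      (exp 3 + 5) * √P.totalDegree * M := by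
  have hM0 : 0 ≤ M := le_trans (by positivity) (hM 0)
  rw [← le_div_iff₀ (exp_pos _)]
  refine sqrt_sum_sq_le_of_forall_sum_mul_le (by positivity) fun v hv => ?_
  rw [le_div_iff₀ (exp_pos _)]
  refine le_trans ?_ (abs_sum_mul_eval_pderiv_mul_exp_le hM hv x)
  gcongr
  exact le_abs_self _

end SeveralVariables

/-- Dimension independent `L^∞` Freud inequality in Gauss space. -/
theorem freud_Linfty_gauss :
    ∃ C : ℝ, 0 < C ∧ ∀ k : ℕ, 1 ≤ k → ∀ P : MvPolynomial (Fin k) ℝ,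
      (⨆ x : Fin k → ℝ, gaussDensity k x * gradNorm P x) ≤
        C * Real.sqrt (P.totalDegree : ℝ) *
          ⨆ x : Fin k → ℝ, gaussDensity k x * |MvPolynomial.eval x P| := by
  refine ⟨exp 3 + 5, by positivity, fun k _ P => ?_⟩
  have hc : (0 : ℝ) ≤ (2 * π) ^ (-(k : ℝ) / 2) := by positivity
  simp only [gaussDensity, gradNorm, mul_assoc _ (exp _), mul_comm (exp _),
    ← Real.mul_iSup_of_nonneg hc]
  rw [mul_left_comm]
  gcongr
  exact ciSup_le (sqrt_sum_eval_pderiv_sq_mul_exp_le (le_ciSup (bddAbove_abs_eval_mul_exp P)))
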